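/- Let x ∈ E with v₁·δ < dist(x, ∂E). If α·d < 1, then p̂ₙ(x) → p(x) almost surely as n → ∞. -/

import Mathlib

open MeasureTheory ProbabilityTheory Filter

noncomputable def iterK {S : Type*} [MeasurableSpace S] (R : S → Measure S) : ℕ → S → Measure S
  | 0, y => Measure.dirac y
  | n+1, y => (iterK R n y).bind R

/-!
Write `K_j` for `K` rescaled to bandwidth `v j` around `x`, so that the estimator averages
`K_j (Z j)`. Replacing `K_(i+1) (Z (i+1))` by its conditional expectation `∫ K_(i+1) dR(Z i, ·)`
costs martingale differences of variance `O(v_(i+1) ^ (-d))`. As `α d < 1`, these variances divided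
by `i ^ 2` are summable, so the martingale with increments divided by `i + 1` is bounded in `L²`,
converges almost surely, and by Kronecker's lemma the noise averages to `0`. The conditional
expectation tends to `r (Z i) x` uniformly in `Z i`, because the densities `r ξ` are equicontinuous
at `x` and the kernels concentrate there.

It remains to average `h (Z i)` for the bounded function `h = r(·, x)`. The same martingale argument
and a telescoping sum show that replacing `h` by `R h`, hence by `R^m h` for any fixed `m`, does not
change the limiting average; uniform ergodicity puts `R^m h` uniformly close to `∫ h dπ`.
-/

open Function Module
open scoped Topology

section CesaroMeans

/-- The average of the first `n` terms of a real sequence, with value `0` at `n = 0`. -/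
noncomputable def cesaroMean (a : ℕ → ℝ) (n : ℕ) : ℝ :=
  (n : ℝ)⁻¹ * ∑ i ∈ Finset.range n, a i

/-- The partial sums of `a i / (i + 1)`, through which Kronecker's lemma controls `cesaroMean a`. -/
noncomputable def harmonicSum (a : ℕ → ℝ) (n : ℕ) : ℝ :=
  ∑ i ∈ Finset.range n, a i / ((i : ℝ) + 1)

variable {a b : ℕ → ℝ} {l : ℝ}

lemma cesaroMean_add (a b : ℕ → ℝ) (n : ℕ) :
    cesaroMean (fun i => a i + b i) n = cesaroMean a n + cesaroMean b n := by
  simp only [cesaroMean, Finset.sum_add_distrib, mul_add]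

lemma harmonicSum_succ (a : ℕ → ℝ) (n : ℕ) :
    harmonicSum a (n + 1) = harmonicSum a n + a n / ((n : ℝ) + 1) :=
  Finset.sum_range_succ _ _

lemma sum_range_eq_mul_harmonicSum_sub (a : ℕ → ℝ) (n : ℕ) :
    ∑ i ∈ Finset.range n, a i
      = n * harmonicSum a n - ∑ i ∈ Finset.range n, harmonicSum a i := by
  induction n with
  | zero => simp
  | succ n ih =>
    rw [Finset.sum_range_succ, Finset.sum_range_succ, ih, harmonicSum_succ]
    push_cast
    field_simp
    ring

lemma tendsto_cesaroMean_zero_of_tendsto_harmonicSum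
    (h : Tendsto (harmonicSum a) atTop (𝓝 l)) : Tendsto (cesaroMean a) atTop (𝓝 0) := by
  have hsub : Tendsto (fun n => harmonicSum a n - cesaroMean (harmonicSum a) n) atTop (𝓝 0) := by
    simpa only [sub_self, cesaroMean] using h.sub h.cesaro
  refine hsub.congr' ?_
  filter_upwards [eventually_ne_atTop 0] with n hn
  rw [cesaroMean, cesaroMean, sum_range_eq_mul_harmonicSum_sub a]
  field_simp

lemma tendsto_inv_mul_sum_range_succ (h : Tendsto (cesaroMean fun i => a (i + 1)) atTop (𝓝 l)) :
    Tendsto (fun n : ℕ => (n : ℝ)⁻¹ * ∑ i ∈ Finset.range (n + 1), a i) atTop (𝓝 l) := by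
  have hfirst : Tendsto (fun n : ℕ => (n : ℝ)⁻¹ * a 0) atTop (𝓝 0) := by
    simpa only [zero_mul] using tendsto_inv_atTop_nhds_zero_nat.mul_const (a 0)
  simpa only [add_zero, cesaroMean, ← mul_add, ← Finset.sum_range_succ'] using h.add hfirst

lemma tendsto_cesaroMean_sub_succ {C : ℝ} (ha : ∀ i, |a i| ≤ C) :
    Tendsto (cesaroMean fun i => a i - a (i + 1)) atTop (𝓝 0) := by
  have hbound (n : ℕ) : |a 0 - a n| ≤ C + C :=
    (abs_sub _ _).trans (add_le_add (ha 0) (ha n))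
  exact (bdd_le_mul_tendsto_zero' (C + C) (.of_forall hbound)
    tendsto_inv_atTop_nhds_zero_nat).congr fun n => by
      rw [cesaroMean, Finset.sum_range_sub', mul_comm]

lemma abs_cesaroMean_sub_le {ε : ℝ} (ha : ∀ i, |a i - l| ≤ ε) {n : ℕ} (hn : n ≠ 0) :
    |cesaroMean a n - l| ≤ ε := by
  have hmean : cesaroMean a n - l = (n : ℝ)⁻¹ * ∑ i ∈ Finset.range n, (a i - l) := by
    rw [cesaroMean, Finset.sum_sub_distrib]
    simp only [Finset.sum_const, Finset.card_range, nsmul_eq_mul]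
    field_simp
  rw [hmean, abs_mul, abs_of_nonneg (by positivity), inv_mul_le_iff₀ (by positivity)]
  calc |∑ i ∈ Finset.range n, (a i - l)| ≤ ∑ i ∈ Finset.range n, |a i - l| :=
        Finset.abs_sum_le_sum_abs _ _
    _ ≤ ∑ _i ∈ Finset.range n, ε := Finset.sum_le_sum fun i _ => ha i
    _ = n * ε := by simp

lemma tendsto_cesaroMean_of_forall_approx
    (h : ∀ ε > 0, ∃ b : ℕ → ℝ, Tendsto (cesaroMean fun i => a i - b i) atTop (𝓝 0) ∧
      ∀ i, |b i - l| ≤ ε) :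
    Tendsto (cesaroMean a) atTop (𝓝 l) := by
  refine Metric.tendsto_nhds.2 fun ε hε => ?_
  obtain ⟨b, hab, hb⟩ := h (ε / 2) (half_pos hε)
  filter_upwards [Metric.tendsto_nhds.1 hab (ε / 2) (half_pos hε), eventually_ne_atTop 0]
    with n hsmall hn
  have hsplit : cesaroMean a n = cesaroMean (fun i => a i - b i) n + cesaroMean b n := by
    rw [← cesaroMean_add]
    simp only [sub_add_cancel]
  rw [Real.dist_eq, sub_zero] at hsmall
  rw [Real.dist_eq, hsplit, add_sub_assoc]
  linarith [abs_add_le (cesaroMean (fun i => a i - b i) n) (cesaroMean b n - l),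
    abs_cesaroMean_sub_le hb hn]

lemma summable_succ_div_sq (h : Summable fun i : ℕ => a i / ((i : ℝ) + 1) ^ 2) :
    Summable fun i : ℕ => a (i + 1) / ((i : ℝ) + 1) ^ 2 := by
  have hshift := ((summable_nat_add_iff 1).2 h.abs).mul_left 4
  refine hshift.of_norm_bounded fun i => ?_
  have hsq : (((i + 1 : ℕ) : ℝ) + 1) ^ 2 ≤ 4 * ((i : ℝ) + 1) ^ 2 := by
    push_cast
    nlinarith [(Nat.cast_nonneg i : (0 : ℝ) ≤ i)]
  rw [Real.norm_eq_abs, abs_div, abs_div, abs_sq, abs_sq, ← mul_div_assoc,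
    div_le_div_iff₀ (by positivity) (by positivity)]
  linarith [mul_le_mul_of_nonneg_left hsq (abs_nonneg (a (i + 1)))]

lemma sum_Icc_one_eq_sum_range {M : Type*} [AddCommMonoid M] (f : ℕ → M) (n : ℕ) :
    ∑ j ∈ Finset.Icc 1 n, f j = ∑ j ∈ Finset.range n, f (j + 1) := by
  rw [Finset.range_eq_Ico, Finset.sum_Ico_add', zero_add, Finset.Ico_add_one_right_eq_Icc]

end CesaroMeans

section StrongLaw

variable {Ω : Type*} {mΩ : MeasurableSpace Ω} {P : Measure Ω} {F : Filtration ℕ mΩ}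
  {D X : ℕ → Ω → ℝ}

lemma integral_mul_eq_zero_of_condExp_eq_zero [IsFiniteMeasure P] {m : MeasurableSpace Ω}
    (hm : m ≤ mΩ) {f g : Ω → ℝ} (hf : StronglyMeasurable[m] f) (hfL2 : MemLp f 2 P)
    (hgL2 : MemLp g 2 P) (hg : P[g | m] =ᵐ[P] 0) : ∫ ω, f ω * g ω ∂P = 0 := by
  have hpull : P[f * g | m] =ᵐ[P] f * P[g | m] :=
    condExp_mul_of_stronglyMeasurable_left hf (hfL2.integrable_mul hgL2)
      (hgL2.integrable (by norm_num))
  calc ∫ ω, f ω * g ω ∂P = ∫ ω, (P[f * g | m]) ω ∂P := (integral_condExp hm).symm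
    _ = 0 := integral_eq_zero_of_ae <| by
      filter_upwards [hpull, hg] with ω hω hgω
      simp only [hω, Pi.mul_apply, hgω, Pi.zero_apply, mul_zero]

lemma integral_sq_sub_condExp_le [IsFiniteMeasure P] {m : MeasurableSpace Ω} (hm : m ≤ mΩ)
    {f : Ω → ℝ} (hf : MemLp f 2 P) :
    ∫ ω, (f ω - (P[f | m]) ω) ^ 2 ∂P ≤ ∫ ω, f ω ^ 2 ∂P :=
  calc ∫ ω, (f ω - (P[f | m]) ω) ^ 2 ∂P = ∫ ω, (Var[f; P | m]) ω ∂P :=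
        (integral_condExp hm).symm
    _ ≤ ∫ ω, (P[f ^ 2 | m]) ω ∂P :=
        integral_mono_ae integrable_condVar integrable_condExp (condVar_ae_le_condExp_sq hm hf)
    _ = ∫ ω, f ω ^ 2 ∂P := integral_condExp hm

/-- A sequence of square-integrable martingale differences, indexed so that `D i` is the increment
between the times `i` and `i + 1` of the filtration. -/
structure IsMartingaleDifference (D : ℕ → Ω → ℝ) (F : Filtration ℕ mΩ) (P : Measure Ω) :
    Prop where
  stronglyMeasurable (i : ℕ) : StronglyMeasurable[F (i + 1)] (D i)
  memLp (i : ℕ) : MemLp (D i) 2 P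
  condExp_ae_eq_zero (i : ℕ) : P[D i | F i] =ᵐ[P] 0

lemma isMartingaleDifference_sub_condExp [IsFiniteMeasure P]
    (hX : ∀ i, StronglyMeasurable[F i] (X i)) (hXL2 : ∀ i, MemLp (X i) 2 P) :
    IsMartingaleDifference (fun i => X (i + 1) - P[X (i + 1) | F i]) F P where
  stronglyMeasurable i :=
    (hX (i + 1)).sub (stronglyMeasurable_condExp.mono (F.mono i.le_succ))
  memLp i := (hXL2 (i + 1)).sub ((hXL2 (i + 1)).condExp one_le_two)
  condExp_ae_eq_zero i := by
    have hint : Integrable (X (i + 1)) P := (hXL2 (i + 1)).integrable one_le_two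
    refine (condExp_sub hint integrable_condExp (F i)).trans ?_
    rw [condExp_of_stronglyMeasurable (F.le i) stronglyMeasurable_condExp integrable_condExp,
      sub_self]

namespace IsMartingaleDifference

lemma stronglyMeasurable_harmonicSum (hD : IsMartingaleDifference D F P) (n : ℕ) :
    StronglyMeasurable[F n] fun ω => harmonicSum (D · ω) n :=
  Finset.stronglyMeasurable_fun_sum _ fun i hi => by
    simpa only [div_eq_inv_mul] using
      ((hD.stronglyMeasurable i).mono (F.mono (Finset.mem_range.1 hi))).const_mul ((i : ℝ) + 1)⁻¹

lemma memLp_harmonicSum (hD : IsMartingaleDifference D F P) (n : ℕ) :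
    MemLp (fun ω => harmonicSum (D · ω) n) 2 P :=
  memLp_finsetSum _ fun i _ => by
    simpa only [div_eq_inv_mul] using (hD.memLp i).const_mul ((i : ℝ) + 1)⁻¹

variable [IsProbabilityMeasure P]

lemma martingale_harmonicSum (hD : IsMartingaleDifference D F P) :
    Martingale (fun n ω => harmonicSum (D · ω) n) F P := by
  refine martingale_of_condExp_sub_eq_zero_nat hD.stronglyMeasurable_harmonicSum
    (fun n => (hD.memLp_harmonicSum n).integrable one_le_two) fun n => ?_
  have hincr : ((fun ω => harmonicSum (D · ω) (n + 1)) - fun ω => harmonicSum (D · ω) n)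
      = ((n : ℝ) + 1)⁻¹ • D n := by
    ext ω
    simp only [Pi.sub_apply, harmonicSum_succ, add_sub_cancel_left, Pi.smul_apply, smul_eq_mul,
      div_eq_inv_mul]
  rw [hincr]
  refine (condExp_smul _ _ _).trans ?_
  filter_upwards [hD.condExp_ae_eq_zero n] with ω hω
  simp only [Pi.smul_apply, hω, Pi.zero_apply, smul_zero]

lemma integral_sq_harmonicSum (hD : IsMartingaleDifference D F P) (n : ℕ) :
    ∫ ω, harmonicSum (D · ω) n ^ 2 ∂P
      = ∑ i ∈ Finset.range n, (∫ ω, D i ω ^ 2 ∂P) / ((i : ℝ) + 1) ^ 2 := by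
  induction n with
  | zero => simp [harmonicSum]
  | succ n ih =>
    have hcross : ∫ ω, harmonicSum (D · ω) n * D n ω ∂P = 0 :=
      integral_mul_eq_zero_of_condExp_eq_zero (F.le n) (hD.stronglyMeasurable_harmonicSum n)
        (hD.memLp_harmonicSum n) (hD.memLp n) (hD.condExp_ae_eq_zero n)
    have hexpand (ω : Ω) : harmonicSum (D · ω) (n + 1) ^ 2
        = harmonicSum (D · ω) n ^ 2 + 2 / ((n : ℝ) + 1) * (harmonicSum (D · ω) n * D n ω)
          + D n ω ^ 2 / ((n : ℝ) + 1) ^ 2 := by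
      rw [harmonicSum_succ]
      field_simp
      ring
    have hM := (hD.memLp_harmonicSum n).integrable_sq
    have hMD : Integrable
        (fun ω => 2 / ((n : ℝ) + 1) * (harmonicSum (D · ω) n * D n ω)) P :=
      ((hD.memLp_harmonicSum n).integrable_mul (hD.memLp n)).const_mul _
    simp only [hexpand]
    rw [integral_add (by exact hM.add hMD) ((hD.memLp n).integrable_sq.div_const _),
      integral_add hM hMD, integral_const_mul, integral_div, hcross, mul_zero, add_zero,
      Finset.sum_range_succ, ih]

lemma exists_eLpNorm_harmonicSum_le (hD : IsMartingaleDifference D F P)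
    (hsum : Summable fun i : ℕ => (∫ ω, D i ω ^ 2 ∂P) / ((i : ℝ) + 1) ^ 2) :
    ∃ B : NNReal, ∀ n, eLpNorm (fun ω => harmonicSum (D · ω) n) 1 P ≤ B := by
  refine ⟨(√(∑' i : ℕ, (∫ ω, D i ω ^ 2 ∂P) / ((i : ℝ) + 1) ^ 2)).toNNReal, fun n => ?_⟩
  have hL2 := hD.memLp_harmonicSum n
  refine (eLpNorm_le_eLpNorm_of_exponent_le one_le_two hL2.1).trans ?_
  rw [hL2.eLpNorm_eq_integral_rpow_norm two_ne_zero ENNReal.ofNat_ne_top]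
  refine ENNReal.ofReal_le_ofReal ?_
  simp only [ENNReal.toReal_ofNat, Real.rpow_ofNat, Real.norm_eq_abs, sq_abs,
    hD.integral_sq_harmonicSum]
  rw [Real.sqrt_eq_rpow, one_div]
  gcongr
  exact hsum.sum_le_tsum _ fun i _ => by positivity

theorem ae_tendsto_cesaroMean (hD : IsMartingaleDifference D F P)
    (hsum : Summable fun i : ℕ => (∫ ω, D i ω ^ 2 ∂P) / ((i : ℝ) + 1) ^ 2) :
    ∀ᵐ ω ∂P, Tendsto (cesaroMean (D · ω)) atTop (𝓝 0) := by
  obtain ⟨B, hB⟩ := hD.exists_eLpNorm_harmonicSum_le hsum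
  filter_upwards [hD.martingale_harmonicSum.submartingale.exists_ae_tendsto_of_bdd hB]
    with ω ⟨l, hl⟩
  exact tendsto_cesaroMean_zero_of_tendsto_harmonicSum hl

end IsMartingaleDifference

theorem ae_tendsto_cesaroMean_sub_condExp [IsProbabilityMeasure P]
    (hX : ∀ i, StronglyMeasurable[F i] (X i)) (hXL2 : ∀ i, MemLp (X i) 2 P)
    (hsum : Summable fun i : ℕ => (∫ ω, X (i + 1) ω ^ 2 ∂P) / ((i : ℝ) + 1) ^ 2) :
    ∀ᵐ ω ∂P, Tendsto (cesaroMean fun i => X (i + 1) ω - (P[X (i + 1) | F i]) ω)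
      atTop (𝓝 0) := by
  refine (isMartingaleDifference_sub_condExp hX hXL2).ae_tendsto_cesaroMean
    (hsum.of_nonneg_of_le (fun i => by positivity) fun i => ?_)
  exact div_le_div_of_nonneg_right (integral_sq_sub_condExp_le (F.le i) (hXL2 (i + 1)))
    (by positivity)

end StrongLaw

section TotalVariation

variable {S : Type*} [MeasurableSpace S] {h : S → ℝ} {C : ℝ}

lemma abs_integral_le_of_forall_abs_le (μ : Measure S) [IsProbabilityMeasure μ]
    (hC : ∀ u, |h u| ≤ C) : |∫ u, h u ∂μ| ≤ C := by
  simpa only [Real.norm_eq_abs, probReal_univ, mul_one] using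
    norm_integral_le_of_norm_le_const (μ := μ) (f := h) (.of_forall hC)

lemma integrableOn_measureReal_superlevel (μ : Measure S) [IsProbabilityMeasure μ]
    (h : S → ℝ) (C : ℝ) : IntegrableOn (fun t => μ.real {u | t ≤ h u}) (Set.Ioc 0 C) := by
  have hanti : Antitone fun t => μ.real {u | t ≤ h u} := fun _ _ hst =>
    measureReal_mono fun _ hu => hst.trans hu
  refine Measure.integrableOn_of_bounded (M := 1) (by simp)
    hanti.measurable.aestronglyMeasurable (.of_forall fun t => ?_)
  rw [Real.norm_eq_abs, abs_of_nonneg measureReal_nonneg]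
  exact measureReal_le_one

variable {μ π : Measure S} [IsProbabilityMeasure μ] [IsProbabilityMeasure π] {η : ℝ}

lemma abs_integral_sub_integral_le_of_mem_Icc (hm : Measurable h)
    (hC : ∀ u, h u ∈ Set.Icc 0 C) (hη : ∀ B, MeasurableSet B → |μ.real B - π.real B| ≤ η) :
    |∫ u, h u ∂μ - ∫ u, h u ∂π| ≤ η * C := by
  have hC0 : 0 ≤ C := by
    obtain ⟨u⟩ := nonempty_of_isProbabilityMeasure μ
    exact (hC u).1.trans (hC u).2
  have layerCake (ν : Measure S) [IsProbabilityMeasure ν] :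
      ∫ u, h u ∂ν = ∫ t in Set.Ioc 0 C, ν.real {u | t ≤ h u} :=
    Integrable.integral_eq_integral_Ioc_meas_le
      (.of_mem_Icc 0 C hm.aemeasurable (.of_forall hC))
      (.of_forall fun u => (hC u).1) (.of_forall fun u => (hC u).2)
  rw [layerCake μ, layerCake π, ← integral_sub (integrableOn_measureReal_superlevel μ h C)
    (integrableOn_measureReal_superlevel π h C)]
  have hbound := norm_setIntegral_le_of_norm_le_const (μ := volume) (s := Set.Ioc 0 C)
    (f := fun t => μ.real {u | t ≤ h u} - π.real {u | t ≤ h u}) (C := η) (by simp)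
    fun t _ => hη _ (hm measurableSet_Ici)
  rwa [Real.volume_real_Ioc_of_le hC0, sub_zero, Real.norm_eq_abs] at hbound

lemma abs_integral_sub_integral_le_of_forall_abs_le (hm : Measurable h) (hC : ∀ u, |h u| ≤ C)
    (hη : ∀ B, MeasurableSet B → |μ.real B - π.real B| ≤ η) :
    |∫ u, h u ∂μ - ∫ u, h u ∂π| ≤ η * (C + C) := by
  have hint (ν : Measure S) [IsProbabilityMeasure ν] : Integrable h ν :=
    .of_bound hm.aestronglyMeasurable C (.of_forall hC)
  have hshift := abs_integral_sub_integral_le_of_mem_Icc (hm.add_const C)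
    (fun u => ⟨neg_le_iff_add_nonneg.1 (abs_le.1 (hC u)).1,
      add_le_add_left (abs_le.1 (hC u)).2 C⟩) hη
  simpa only [integral_add (hint _) (integrable_const C), integral_const, probReal_univ, one_smul,
    add_sub_add_right_eq_sub] using hshift

end TotalVariation

section MarkovChain

variable {S : Type*} [MeasurableSpace S] {R : Kernel S S} {π : Measure S} {A : Set S}

instance isMarkovKernel_pow [IsMarkovKernel R] (n : ℕ) : IsMarkovKernel (R ^ n) := by
  induction n with
  | zero => exact inferInstanceAs (IsMarkovKernel Kernel.id)
  | succ n ih =>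
    rw [pow_succ']
    exact Kernel.IsMarkovKernel.comp R (R ^ n)

lemma iterK_eq_pow (R : Kernel S S) (n : ℕ) (ξ : S) : iterK R n ξ = (R ^ n) ξ := by
  induction n with
  | zero => rfl
  | succ n ih =>
    rw [iterK, ih, pow_succ']
    exact (Kernel.comp_apply R (R ^ n) ξ).symm

lemma integral_kernel_pow_succ [IsMarkovKernel R] {h : S → ℝ} {C : ℝ} (hm : Measurable h)
    (hC : ∀ u, |h u| ≤ C) (n : ℕ) (ξ : S) :
    ∫ u, h u ∂((R ^ (n + 1)) ξ) = ∫ y, ∫ u, h u ∂(R y) ∂((R ^ n) ξ) := by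
  rw [pow_succ']
  exact Kernel.integral_comp (κ := R ^ n) (η := R)
    (.of_bound hm.aestronglyMeasurable C (.of_forall hC))

/-- Uniform ergodicity: the laws `(R ^ n) ξ` converge to `π` in total variation, uniformly over
starting points `ξ ∈ A`. -/
def UniformlyErgodicOn (R : Kernel S S) (π : Measure S) (A : Set S) : Prop :=
  ∀ ε > 0, ∀ᶠ n : ℕ in atTop, ∀ ξ ∈ A, ∀ B, MeasurableSet B →
    |((R ^ n) ξ).real B - π.real B| ≤ ε

lemma uniformlyErgodicOn_of_geometric_rate {κ ρ : ℝ} (hρ : 1 < ρ)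
    (hTV : ∀ n : ℕ, 1 ≤ n → ∀ ξ ∈ A, ∀ B, MeasurableSet B →
      |((R ^ n) ξ).real B - π.real B| ≤ κ * ρ ^ (-(n : ℝ))) :
    UniformlyErgodicOn R π A := by
  intro ε hε
  have hlim : Tendsto (fun n : ℕ => κ * ρ ^ (-(n : ℝ))) atTop (𝓝 0) := by
    simpa only [mul_zero, Function.comp_def] using
      ((tendsto_rpow_atBot_of_base_gt_one ρ hρ).comp
        (tendsto_neg_atTop_atBot.comp tendsto_natCast_atTop_atTop)).const_mul κ
  filter_upwards [eventually_ge_atTop 1, hlim.eventually_le_const hε] with n hn hsmall ξ hξ B hB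
  exact (hTV n hn ξ hξ B hB).trans hsmall

variable {Ω : Type*} {mΩ : MeasurableSpace Ω} {P : Measure Ω} {F : Filtration ℕ mΩ}
  {Z : ℕ → Ω → S}

/-- `Z` is a Markov chain with transition kernel `R` relative to the filtration `F`. The Markov
property is tested on bounded measurable functions, for which the integrals are meaningful. -/
structure IsMarkovChain (R : Kernel S S) (F : Filtration ℕ mΩ) (Z : ℕ → Ω → S)
    (P : Measure Ω) : Prop where
  adapted (n : ℕ) : Measurable[F n] (Z n)
  condExp_comp_succ (n : ℕ) (g : S → ℝ) : Measurable g → (∃ C, ∀ u, |g u| ≤ C) →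
    P[fun ω => g (Z (n + 1) ω) | F n] =ᵐ[P] fun ω => ∫ u, g u ∂(R (Z n ω))

lemma exists_isMarkovChain_of_condExp_iSup_fin (hZ : ∀ n, Measurable (Z n))
    (hMarkov : ∀ n, ∀ g : S → ℝ, Measurable g → (∃ C, ∀ u, |g u| ≤ C) →
      P[fun ω => g (Z (n + 1) ω) | ⨆ i : Fin (n + 1), MeasurableSpace.comap (Z i) inferInstance]
        =ᵐ[P] fun ω => ∫ u, g u ∂(R (Z n ω))) :
    ∃ F : Filtration ℕ mΩ, IsMarkovChain R F Z P := by
  let F : Filtration ℕ mΩ :=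
    { seq := fun n => ⨆ i : Fin (n + 1), MeasurableSpace.comap (Z i) inferInstance
      mono' := fun m n hmn => iSup_le fun i =>
        le_iSup (fun i : Fin (n + 1) => MeasurableSpace.comap (Z i) inferInstance)
          (i.castLE (by omega))
      le' := fun n => iSup_le fun i => (hZ i).comap_le }
  refine ⟨F, fun n => ?_, hMarkov⟩
  exact measurable_iff_comap_le.2
    (le_iSup (fun i : Fin (n + 1) => MeasurableSpace.comap (Z i) inferInstance) (Fin.last n))

namespace IsMarkovChain

variable [IsProbabilityMeasure P]

lemma integral_comp_succ_le (hZ : IsMarkovChain R F Z P) {n : ℕ} (hZA : ∀ ω, Z n ω ∈ A)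
    {g : S → ℝ} (hg : Measurable g) (hgb : ∃ C, ∀ u, |g u| ≤ C) {V : ℝ}
    (hV : ∀ ξ ∈ A, ∫ u, g u ∂(R ξ) ≤ V) :
    ∫ ω, g (Z (n + 1) ω) ∂P ≤ V := by
  have hcond := hZ.condExp_comp_succ n g hg hgb
  calc ∫ ω, g (Z (n + 1) ω) ∂P = ∫ ω, ∫ u, g u ∂(R (Z n ω)) ∂P := by
        rw [← integral_condExp (F.le n), integral_congr_ae hcond]
    _ ≤ ∫ _, V ∂P := integral_mono (integrable_condExp.congr hcond) (integrable_const V)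
        fun ω => hV _ (hZA ω)
    _ = V := by simp only [integral_const, probReal_univ, one_smul]

lemma summable_integral_sq (hZ : IsMarkovChain R F Z P) (hZA : ∀ n ω, Z n ω ∈ A)
    {g : ℕ → S → ℝ} (hg : ∀ i, Measurable (g i)) (hgb : ∀ i, ∃ C, ∀ u, |g i u| ≤ C) {V : ℕ → ℝ}
    (hV : ∀ᶠ i in atTop, ∀ ξ ∈ A, ∫ u, g (i + 1) u ^ 2 ∂(R ξ) ≤ V i)
    (hsum : Summable fun i : ℕ => V i / ((i : ℝ) + 1) ^ 2) :
    Summable fun i : ℕ => (∫ ω, g (i + 1) (Z (i + 1) ω) ^ 2 ∂P) / ((i : ℝ) + 1) ^ 2 := by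
  refine hsum.of_norm_bounded_eventually_nat ?_
  filter_upwards [hV] with i hi
  obtain ⟨C, hC⟩ := hgb (i + 1)
  have hsq (u : S) : |g (i + 1) u ^ 2| ≤ C ^ 2 := by
    rw [abs_pow]
    exact pow_le_pow_left₀ (abs_nonneg _) (hC u) 2
  have hmoment : ∫ ω, g (i + 1) (Z (i + 1) ω) ^ 2 ∂P ≤ V i :=
    hZ.integral_comp_succ_le (hZA i) ((hg (i + 1)).pow_const 2) ⟨_, hsq⟩ hi
  rw [Real.norm_of_nonneg (by positivity)]
  exact div_le_div_of_nonneg_right hmoment (by positivity)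

theorem ae_tendsto_cesaroMean_sub_integral (hZ : IsMarkovChain R F Z P) (hZA : ∀ n ω, Z n ω ∈ A)
    {g : ℕ → S → ℝ} (hg : ∀ i, Measurable (g i)) (hgb : ∀ i, ∃ C, ∀ u, |g i u| ≤ C) {V : ℕ → ℝ}
    (hV : ∀ᶠ i in atTop, ∀ ξ ∈ A, ∫ u, g (i + 1) u ^ 2 ∂(R ξ) ≤ V i)
    (hsum : Summable fun i : ℕ => V i / ((i : ℝ) + 1) ^ 2) :
    ∀ᵐ ω ∂P, Tendsto (cesaroMean fun i =>
      g (i + 1) (Z (i + 1) ω) - ∫ u, g (i + 1) u ∂(R (Z i ω))) atTop (𝓝 0) := by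
  have hmeas (i : ℕ) : Measurable[F i] fun ω => g i (Z i ω) := (hg i).comp (hZ.adapted i)
  have hL2 (i : ℕ) : MemLp (fun ω => g i (Z i ω)) 2 P := by
    obtain ⟨C, hC⟩ := hgb i
    exact .of_bound ((hmeas i).mono (F.le i) le_rfl).aestronglyMeasurable C
      (.of_forall fun ω => hC _)
  have hcond := ae_all_iff.2 fun i => hZ.condExp_comp_succ i (g (i + 1)) (hg _) (hgb _)
  filter_upwards [hcond, ae_tendsto_cesaroMean_sub_condExp
    (fun i => (hmeas i).stronglyMeasurable) hL2 (hZ.summable_integral_sq hZA hg hgb hV hsum)]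
    with ω hω hlim
  simpa only [hω] using hlim

variable [IsMarkovKernel R]

lemma ae_tendsto_cesaroMean_succ_sub_integral (hZ : IsMarkovChain R F Z P) {h : S → ℝ} {C : ℝ}
    (hm : Measurable h) (hC : ∀ u, |h u| ≤ C) :
    ∀ᵐ ω ∂P, Tendsto (cesaroMean fun i => h (Z (i + 1) ω) - ∫ u, h u ∂(R (Z i ω)))
      atTop (𝓝 0) := by
  have hsq (ξ : S) : ∫ u, h u ^ 2 ∂(R ξ) ≤ C ^ 2 :=
    le_of_abs_le <| abs_integral_le_of_forall_abs_le (R ξ) fun u => by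
      rw [abs_pow]
      exact pow_le_pow_left₀ (abs_nonneg _) (hC u) 2
  have hsum : Summable fun i : ℕ => C ^ 2 / ((i : ℝ) + 1) ^ 2 := by
    simpa only [Nat.cast_add_one, mul_one_div] using ((summable_nat_add_iff 1).2
      (Real.summable_one_div_nat_pow.2 one_lt_two)).mul_left (C ^ 2)
  exact hZ.ae_tendsto_cesaroMean_sub_integral (A := Set.univ) (fun _ _ => trivial)
    (g := fun _ => h) (fun _ => hm) (fun _ => ⟨C, hC⟩) (.of_forall fun _ ξ _ => hsq ξ) hsum

lemma ae_tendsto_cesaroMean_sub_kernel_pow (hZ : IsMarkovChain R F Z P) {h : S → ℝ} {C : ℝ}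
    (hm : Measurable h) (hC : ∀ u, |h u| ≤ C) (m : ℕ) :
    ∀ᵐ ω ∂P, Tendsto (cesaroMean fun i => h (Z i ω) - ∫ u, h u ∂((R ^ m) (Z i ω)))
      atTop (𝓝 0) := by
  induction m generalizing h with
  | zero =>
    refine .of_forall fun ω => tendsto_const_nhds.congr fun n => ?_
    have hdirac (ξ : S) : ∫ u, h u ∂((R ^ 0) ξ) = h ξ :=
      integral_dirac' h ξ hm.stronglyMeasurable
    simp only [cesaroMean, hdirac, sub_self, Finset.sum_const_zero, mul_zero]
  | succ m ih =>
    have hRm : Measurable fun ξ => ∫ u, h u ∂(R ξ) :=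
      hm.stronglyMeasurable.integral_kernel.measurable
    filter_upwards [hZ.ae_tendsto_cesaroMean_succ_sub_integral hm hC,
      ih hRm fun ξ => abs_integral_le_of_forall_abs_le (R ξ) hC] with ω hstep hih
    have htel := tendsto_cesaroMean_sub_succ fun i => hC (Z i ω)
    simpa only [← cesaroMean_add, sub_add_sub_cancel, add_zero, integral_kernel_pow_succ hm hC]
      using (htel.add hstep).add hih

theorem ae_tendsto_cesaroMean [IsProbabilityMeasure π] (hZ : IsMarkovChain R F Z P)
    (hZA : ∀ n ω, Z n ω ∈ A) (hR : UniformlyErgodicOn R π A) {h : S → ℝ} {C : ℝ}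
    (hm : Measurable h) (hC : ∀ u, |h u| ≤ C) :
    ∀ᵐ ω ∂P, Tendsto (cesaroMean fun i => h (Z i ω)) atTop (𝓝 (∫ u, h u ∂π)) := by
  filter_upwards [ae_all_iff.2 (hZ.ae_tendsto_cesaroMean_sub_kernel_pow hm hC)] with ω hω
  refine tendsto_cesaroMean_of_forall_approx fun ε hε => ?_
  have hC0 : 0 ≤ C := (abs_nonneg _).trans (hC (Z 0 ω))
  obtain ⟨m, hTV⟩ := (hR (ε / (C + C + 1)) (by positivity)).exists
  refine ⟨_, hω m, fun i => ?_⟩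
  calc |∫ u, h u ∂((R ^ m) (Z i ω)) - ∫ u, h u ∂π| ≤ ε / (C + C + 1) * (C + C) :=
        abs_integral_sub_integral_le_of_forall_abs_le hm hC (hTV _ (hZA i ω))
    _ ≤ ε := by
        rw [div_mul_eq_mul_div, div_le_iff₀ (by positivity)]
        linarith

end IsMarkovChain

end MarkovChain

lemma eventually_ball_mul_subset {X : Type*} [PseudoMetricSpace X] {x : X} {U : Set X}
    (hU : U ∈ 𝓝 x) (δ : ℝ) : ∀ᶠ h in 𝓝[>] (0 : ℝ), Metric.ball x (h * δ) ⊆ U := by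
  obtain ⟨η, hη, hball⟩ := Metric.mem_nhds_iff.1 hU
  have hlim : Tendsto (fun h : ℝ => h * δ) (𝓝[>] 0) (𝓝 0) :=
    ((continuous_mul_const δ).tendsto' 0 0 (zero_mul δ)).mono_left nhdsWithin_le_nhds
  filter_upwards [hlim.eventually_lt_const hη] with h hh
  exact (Metric.ball_subset_ball hh.le).trans hball

lemma equicontinuousAt_of_dist_le_mul {ι X Y : Type*} [PseudoMetricSpace X] [PseudoMetricSpace Y]
    {f : ι → X → Y} {E : Set X} {x : X} (hE : E ∈ 𝓝 x) {L : ℝ}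
    (hL : ∀ i, ∀ y ∈ E, dist (f i x) (f i y) ≤ L * dist x y) : EquicontinuousAt f x := by
  have hlim : Tendsto (fun y => L * dist x y) (𝓝 x) (𝓝 0) :=
    (by fun_prop : Continuous fun y => L * dist x y).tendsto' x 0 (by simp)
  refine Metric.equicontinuousAt_of_continuity_modulus _ hlim f ?_
  filter_upwards [hE] with y hy i
  exact hL i y hy

section ScaledKernel

variable {X : Type*} [NormedAddCommGroup X] [NormedSpace ℝ X] {K : X → ℝ} {h δ : ℝ} {x : X}

/-- The rescaling `h⁻ᵈ K((· - x) / h)` of a kernel `K` to bandwidth `h` around `x`, where `d` is the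
dimension of the ambient space. -/
noncomputable def scaledKernel (K : X → ℝ) (h : ℝ) (x u : X) : ℝ :=
  (h ^ finrank ℝ X)⁻¹ * K (h⁻¹ • (u - x))

lemma scaledKernel_sq (K : X → ℝ) (h : ℝ) (x u : X) :
    scaledKernel K h x u ^ 2 = (h ^ finrank ℝ X)⁻¹ * scaledKernel (fun z => K z ^ 2) h x u := by
  simp only [scaledKernel]
  ring

lemma abs_scaledKernel (K : X → ℝ) (hh : 0 ≤ h) (x u : X) :
    |scaledKernel K h x u| = scaledKernel (fun z => |K z|) h x u := by
  rw [scaledKernel, abs_mul, abs_of_nonneg (by positivity), scaledKernel]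

lemma support_scaledKernel_subset (hK : support K ⊆ Metric.ball 0 δ) (hh : 0 < h) :
    support (scaledKernel K h x) ⊆ Metric.ball x (h * δ) := fun u hu => by
  have hmem := hK (right_ne_zero_of_mul hu)
  rwa [mem_ball_zero_iff, norm_smul, norm_inv, Real.norm_eq_abs, abs_of_pos hh,
    inv_mul_lt_iff₀ hh, ← mem_ball_iff_norm] at hmem

lemma norm_mul_scaledKernel_le (hδ : support K ⊆ Metric.ball 0 δ) (hh : 0 < h) {φ : X → ℝ}
    {C : ℝ} (hφ : ∀ z ∈ Metric.ball x (h * δ), |φ z| ≤ C) (z : X) :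
    ‖φ z * scaledKernel K h x z‖ ≤ C * |scaledKernel K h x z| := by
  rw [norm_mul, Real.norm_eq_abs, Real.norm_eq_abs]
  by_cases hz : z ∈ support (scaledKernel K h x)
  · exact mul_le_mul_of_nonneg_right (hφ z (support_scaledKernel_subset hδ hh hz)) (abs_nonneg _)
  · simp only [notMem_support.1 hz, abs_zero, mul_zero, le_refl]

variable [MeasurableSpace X] [BorelSpace X]

lemma measurable_scaledKernel (hK : Measurable K) (h : ℝ) (x : X) :
    Measurable (scaledKernel K h x) :=
  (hK.comp (by fun_prop)).const_mul _

variable [FiniteDimensional ℝ X] {ν : Measure X} [ν.IsAddHaarMeasure]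

lemma integrable_scaledKernel (hK : Integrable K ν) (hh : 0 < h) (x : X) :
    Integrable (scaledKernel K h x) ν :=
  ((hK.comp_smul (inv_ne_zero hh.ne')).comp_sub_right x).const_mul _

lemma integral_scaledKernel (K : X → ℝ) (hh : 0 < h) (x : X) :
    ∫ u, scaledKernel K h x u ∂ν = ∫ z, K z ∂ν := by
  simp only [scaledKernel]
  rw [integral_const_mul, integral_sub_right_eq_self (fun u => K (h⁻¹ • u)) x,
    Measure.integral_comp_inv_smul_of_nonneg _ _ hh.le, smul_eq_mul,
    inv_mul_cancel_left₀ (by positivity)]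

lemma abs_integral_mul_scaledKernel_le (hK : Integrable K ν) (hδ : support K ⊆ Metric.ball 0 δ)
    (hh : 0 < h) {φ : X → ℝ} {C : ℝ} (hφ : ∀ z ∈ Metric.ball x (h * δ), |φ z| ≤ C) :
    |∫ z, φ z * scaledKernel K h x z ∂ν| ≤ C * ∫ z, |K z| ∂ν :=
  calc |∫ z, φ z * scaledKernel K h x z ∂ν| ≤ ∫ z, C * |scaledKernel K h x z| ∂ν :=
        norm_integral_le_of_norm_le ((integrable_scaledKernel hK hh x).abs.const_mul C)
          (.of_forall (norm_mul_scaledKernel_le hδ hh hφ))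
    _ = C * ∫ z, |K z| ∂ν := by
        simp only [integral_const_mul, abs_scaledKernel K hh.le, integral_scaledKernel _ hh]

lemma abs_integral_mul_scaledKernel_sub_le (hK : ∫ z, K z ∂ν = 1)
    (hδ : support K ⊆ Metric.ball 0 δ) (hh : 0 < h) {f : X → ℝ} (hf : Measurable f) {c ε : ℝ}
    (hfc : ∀ z ∈ Metric.ball x (h * δ), |f z - c| ≤ ε) :
    |∫ z, f z * scaledKernel K h x z ∂ν - c| ≤ ε * ∫ z, |K z| ∂ν := by
  have hKint : Integrable K ν := .of_integral_ne_zero (hK ▸ one_ne_zero)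
  have hint : Integrable (scaledKernel K h x) ν := integrable_scaledKernel hKint hh x
  have hfint : Integrable (fun z => (f z - c) * scaledKernel K h x z) ν :=
    (hint.abs.const_mul ε).mono' ((hf.sub_const c).aestronglyMeasurable.mul hint.1)
      (.of_forall (norm_mul_scaledKernel_le hδ hh hfc))
  have hcentre : ∫ z, f z * scaledKernel K h x z ∂ν - c
      = ∫ z, (f z - c) * scaledKernel K h x z ∂ν :=
    calc ∫ z, f z * scaledKernel K h x z ∂ν - c
        = ∫ z, ((f z - c) * scaledKernel K h x z + c * scaledKernel K h x z) ∂ν - c := by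
          simp only [← add_mul, sub_add_cancel]
      _ = ∫ z, (f z - c) * scaledKernel K h x z ∂ν := by
          rw [integral_add hfint (hint.const_mul c), integral_const_mul,
            integral_scaledKernel K hh, hK, mul_one, add_sub_cancel_right]
  rw [hcentre]
  exact abs_integral_mul_scaledKernel_le hKint hδ hh hfc

lemma abs_integral_mul_sq_scaledKernel_le (hK : Integrable (fun z => K z ^ 2) ν)
    (hδ : support K ⊆ Metric.ball 0 δ) (hh : 0 < h) {f : X → ℝ} {C : ℝ}
    (hf : ∀ z ∈ Metric.ball x (h * δ), |f z| ≤ C) :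
    |∫ z, f z * scaledKernel K h x z ^ 2 ∂ν| ≤ C * (∫ z, K z ^ 2 ∂ν) * (h ^ finrank ℝ X)⁻¹ := by
  have hsupp : support (fun z => K z ^ 2) ⊆ Metric.ball 0 δ :=
    by rwa [support_pow K two_ne_zero]
  have hbound := abs_integral_mul_scaledKernel_le hK hsupp hh hf
  simp only [abs_sq] at hbound
  simp only [scaledKernel_sq, mul_left_comm (f _), integral_const_mul]
  rw [abs_mul, abs_of_nonneg (by positivity), mul_comm]
  exact mul_le_mul_of_nonneg_right hbound (by positivity)

end ScaledKernel

section TransitionDensity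

variable {S X : Type*} [MeasurableSpace S] [MeasurableSpace X] {R : Kernel S X} {r : S → X → ℝ}
  {A : Set S} {E : Set X} {ν : Measure X}

/-- On the region `E`, the transition kernel `R` started from any point of `A` has the density `r`
with respect to `ν`. Outside `E`, which need not carry full mass, nothing is required. -/
structure IsTransitionDensityOn (R : Kernel S X) (r : S → X → ℝ) (A : Set S)
    (E : Set X) (ν : Measure X) : Prop where
  measurable : Measurable (uncurry r)
  nonneg (ξ : S) (z : X) : 0 ≤ r ξ z
  apply_eq_lintegral : ∀ ξ ∈ A, ∀ B ⊆ E, MeasurableSet B →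
    R ξ B = ∫⁻ z in B, ENNReal.ofReal (r ξ z) ∂ν

lemma IsTransitionDensityOn.integral_eq (hr : IsTransitionDensityOn R r A E ν) {ξ : S} (hξ : ξ ∈ A)
    {U : Set X} (hU : MeasurableSet U) (hUE : U ⊆ E) {g : X → ℝ} (hg : support g ⊆ U) :
    ∫ z, g z ∂(R ξ) = ∫ z, r ξ z * g z ∂ν := by
  have hrestrict : (R ξ).restrict U
      = (ν.withDensity fun z => ENNReal.ofReal (r ξ z)).restrict U := by
    ext B hB
    rw [Measure.restrict_apply hB, Measure.restrict_apply hB,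
      hr.apply_eq_lintegral ξ hξ _ (Set.inter_subset_right.trans hUE) (hB.inter hU),
      withDensity_apply _ (hB.inter hU)]
  have hvanish (z : X) (hz : z ∉ U) : g z = 0 := notMem_support.1 fun h => hz (hg h)
  rw [← setIntegral_eq_integral_of_forall_compl_eq_zero hvanish, hrestrict,
    setIntegral_eq_integral_of_forall_compl_eq_zero hvanish,
    integral_withDensity_eq_integral_toReal_smul hr.measurable.of_uncurry_left.ennreal_ofReal
      (by simp)]
  simp only [ENNReal.toReal_ofReal (hr.nonneg _ _), smul_eq_mul]

end TransitionDensity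

section SmoothingKernel

variable {X : Type*} [NormedAddCommGroup X] [MeasurableSpace X] {ν : Measure X} {K : X → ℝ} {δ : ℝ}

/-- A bounded, possibly signed, kernel of total mass one supported in the ball of radius `δ`. -/
structure IsSmoothingKernel (K : X → ℝ) (δ : ℝ) (ν : Measure X) : Prop where
  measurable : Measurable K
  exists_abs_le : ∃ C, ∀ z, |K z| ≤ C
  support_subset : support K ⊆ Metric.ball 0 δ
  integral_eq_one : ∫ z, K z ∂ν = 1

lemma IsSmoothingKernel.integrable_sq (hK : IsSmoothingKernel K δ ν) :
    Integrable (fun z => K z ^ 2) ν := by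
  obtain ⟨C, hC⟩ := hK.exists_abs_le
  have hKint : Integrable K ν := .of_integral_ne_zero (hK.integral_eq_one ▸ one_ne_zero)
  simpa only [sq] using hKint.bdd_mul hKint.1 (.of_forall hC)

lemma IsSmoothingKernel.exists_abs_scaledKernel_le (hK : IsSmoothingKernel K δ ν) [NormedSpace ℝ X]
    (h : ℝ) (x : X) :
    ∃ C, ∀ u, |scaledKernel K h x u| ≤ C := by
  obtain ⟨C, hC⟩ := hK.exists_abs_le
  refine ⟨|(h ^ finrank ℝ X)⁻¹| * C, fun u => ?_⟩
  rw [scaledKernel, abs_mul]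
  exact mul_le_mul_of_nonneg_left (hC _) (abs_nonneg _)

end SmoothingKernel

section LocalAverage

variable {S X : Type*} [MeasurableSpace S] [NormedAddCommGroup X] [NormedSpace ℝ X]
  [FiniteDimensional ℝ X] [MeasurableSpace X] [BorelSpace X] {ν : Measure X} [ν.IsAddHaarMeasure]
  {R : Kernel S X} {r : S → X → ℝ} {A : Set S} {E : Set X} {K : X → ℝ} {δ : ℝ} {x : X}

theorem tendstoUniformlyOn_integral_scaledKernel (hr : IsTransitionDensityOn R r A E ν)
    (hE : E ∈ 𝓝 x) (hrx : EquicontinuousAt (fun ξ : A => r ξ) x) (hK : IsSmoothingKernel K δ ν) :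
    TendstoUniformlyOn (fun h ξ => ∫ u, scaledKernel K h x u ∂(R ξ)) (fun ξ => r ξ x)
      (𝓝[>] 0) A := by
  refine Metric.tendstoUniformlyOn_iff.2 fun ε hε => ?_
  have hclose := Metric.equicontinuousAt_iff_right.1 hrx (ε / (∫ z, |K z| ∂ν + 1)) (by positivity)
  filter_upwards [self_mem_nhdsWithin, eventually_ball_mul_subset hE δ,
    eventually_ball_mul_subset hclose δ] with h hh hball hosc ξ hξ
  rw [dist_comm, Real.dist_eq, hr.integral_eq hξ Metric.isOpen_ball.measurableSet hball
    (support_scaledKernel_subset hK.support_subset hh)]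
  calc |∫ z, r ξ z * scaledKernel K h x z ∂ν - r ξ x|
      ≤ ε / (∫ z, |K z| ∂ν + 1) * ∫ z, |K z| ∂ν :=
        abs_integral_mul_scaledKernel_sub_le hK.integral_eq_one hK.support_subset hh
          hr.measurable.of_uncurry_left fun z hz => by
            rw [← Real.dist_eq, dist_comm]
            exact (hosc hz ⟨ξ, hξ⟩).le
    _ < ε := by
        rw [div_mul_eq_mul_div, div_lt_iff₀ (by positivity)]
        linarith

theorem exists_eventually_integral_sq_scaledKernel_le (hr : IsTransitionDensityOn R r A E ν)
    (hE : E ∈ 𝓝 x) (hrx : EquicontinuousAt (fun ξ : A => r ξ) x)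
    {C : ℝ} (hC : ∀ ξ, r ξ x ≤ C) (hK : IsSmoothingKernel K δ ν) :
    ∃ V, ∀ᶠ h in 𝓝[>] (0 : ℝ), ∀ ξ ∈ A,
      ∫ u, scaledKernel K h x u ^ 2 ∂(R ξ) ≤ V * (h ^ finrank ℝ X)⁻¹ := by
  refine ⟨(C + 1) * ∫ z, K z ^ 2 ∂ν, ?_⟩
  have hclose := Metric.equicontinuousAt_iff_right.1 hrx 1 one_pos
  filter_upwards [self_mem_nhdsWithin, eventually_ball_mul_subset hE δ,
    eventually_ball_mul_subset hclose δ] with h hh hball hosc ξ hξ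
  have hsupp : support (fun u => scaledKernel K h x u ^ 2) ⊆ Metric.ball x (h * δ) := by
    rw [support_pow _ two_ne_zero]
    exact support_scaledKernel_subset hK.support_subset hh
  have hbound (z : X) (hz : z ∈ Metric.ball x (h * δ)) : |r ξ z| ≤ C + 1 := by
    have hdist := hosc hz ⟨ξ, hξ⟩
    rw [dist_comm, Real.dist_eq] at hdist
    rw [abs_of_nonneg (hr.nonneg ξ z)]
    linarith [le_of_abs_le hdist.le, hC ξ]
  rw [hr.integral_eq hξ Metric.isOpen_ball.measurableSet hball hsupp]
  exact le_of_abs_le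
    (abs_integral_mul_sq_scaledKernel_le hK.integrable_sq hK.support_subset hh hbound)

end LocalAverage

section PowerBandwidth

lemma tendsto_mul_succ_rpow_neg {c α : ℝ} (hc : 0 < c) (hα : 0 < α) :
    Tendsto (fun j : ℕ => c * ((j + 1 : ℕ) : ℝ) ^ (-α)) atTop (𝓝[>] 0) := by
  refine tendsto_nhdsWithin_iff.2 ⟨?_, .of_forall fun j => ?_⟩
  · simpa only [mul_zero, Function.comp_def] using
      (((tendsto_rpow_neg_atTop hα).comp tendsto_natCast_atTop_atTop).comp
        (tendsto_add_atTop_nat 1)).const_mul c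
  · rw [Set.mem_Ioi]
    positivity

lemma summable_inv_mul_succ_rpow_neg_pow_div_sq (c : ℝ) {α : ℝ} {d : ℕ} (hαd : α * d < 1) :
    Summable fun j : ℕ => ((c * ((j + 1 : ℕ) : ℝ) ^ (-α)) ^ d)⁻¹ / ((j : ℝ) + 1) ^ 2 := by
  have hsum : Summable fun j : ℕ => ((j + 1 : ℕ) : ℝ) ^ (α * d - 2) :=
    (summable_nat_add_iff 1).2 (Real.summable_nat_rpow.2 (by linarith))
  refine (hsum.mul_left (c ^ d)⁻¹).congr fun j => ?_
  have hj : (0 : ℝ) < (j + 1 : ℕ) := by positivity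
  rw [mul_pow, mul_inv, ← Real.rpow_mul_natCast hj.le, ← Real.rpow_neg hj.le, neg_mul, neg_neg,
    Real.rpow_sub hj, Real.rpow_two, mul_div_assoc, Nat.cast_succ]

end PowerBandwidth

section RecursiveDensityEstimator

variable {X : Type*} [NormedAddCommGroup X] [NormedSpace ℝ X] [FiniteDimensional ℝ X]
  [MeasurableSpace X] [BorelSpace X] {ν : Measure X} [ν.IsAddHaarMeasure] {R : Kernel X X}
  {r : X → X → ℝ} {A E : Set X} {K : X → ℝ} {δ : ℝ} {x : X}
  {Ω : Type*} {mΩ : MeasurableSpace Ω} {P : Measure Ω} [IsProbabilityMeasure P]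
  {F : Filtration ℕ mΩ} {Z : ℕ → Ω → X} {v : ℕ → ℝ}

theorem ae_tendsto_cesaroMean_scaledKernel_sub_integral (hZ : IsMarkovChain R F Z P)
    (hZA : ∀ n ω, Z n ω ∈ A) (hr : IsTransitionDensityOn R r A E ν)
    (hE : E ∈ 𝓝 x) (hrx : EquicontinuousAt (fun ξ : A => r ξ) x)
    {C : ℝ} (hC : ∀ ξ, r ξ x ≤ C) (hK : IsSmoothingKernel K δ ν) (hv : Tendsto v atTop (𝓝[>] 0))
    (hvsum : Summable fun i : ℕ => (v i ^ finrank ℝ X)⁻¹ / ((i : ℝ) + 1) ^ 2) :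
    ∀ᵐ ω ∂P, Tendsto (cesaroMean fun i => scaledKernel K (v (i + 1)) x (Z (i + 1) ω)
      - ∫ u, scaledKernel K (v (i + 1)) x u ∂(R (Z i ω))) atTop (𝓝 0) := by
  obtain ⟨V, hV⟩ := exists_eventually_integral_sq_scaledKernel_le hr hE hrx hC hK
  have hVsum : Summable fun i : ℕ => V * (v (i + 1) ^ finrank ℝ X)⁻¹ / ((i : ℝ) + 1) ^ 2 := by
    simpa only [mul_div_assoc] using (summable_succ_div_sq hvsum).mul_left V
  exact hZ.ae_tendsto_cesaroMean_sub_integral hZA (g := fun i => scaledKernel K (v i) x)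
    (fun i => measurable_scaledKernel hK.measurable (v i) x)
    (fun i => hK.exists_abs_scaledKernel_le (v i) x)
    (((tendsto_add_atTop_iff_nat 1).2 hv).eventually hV) hVsum

variable {π : Measure X} [IsProbabilityMeasure π] [IsMarkovKernel R]

theorem stmt2_general (hZ : IsMarkovChain R F Z P) (hZA : ∀ n ω, Z n ω ∈ A)
    (hR : UniformlyErgodicOn R π A) (hr : IsTransitionDensityOn R r A E ν) (hE : E ∈ 𝓝 x)
    (hrx : EquicontinuousAt (fun ξ : A => r ξ) x) {C : ℝ} (hC : ∀ ξ, r ξ x ≤ C)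
    (hK : IsSmoothingKernel K δ ν) (hv : Tendsto v atTop (𝓝[>] 0))
    (hvsum : Summable fun i : ℕ => (v i ^ finrank ℝ X)⁻¹ / ((i : ℝ) + 1) ^ 2) :
    ∀ᵐ ω ∂P, Tendsto (fun n : ℕ => (n : ℝ)⁻¹ *
      ∑ j ∈ Finset.range (n + 1), scaledKernel K (v j) x (Z j ω)) atTop (𝓝 (∫ u, r u x ∂π)) := by
  have herg := hZ.ae_tendsto_cesaroMean hZA hR hr.measurable.of_uncurry_right
    fun ξ => (abs_of_nonneg (hr.nonneg ξ x)).trans_le (hC ξ)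
  filter_upwards [herg,
    ae_tendsto_cesaroMean_scaledKernel_sub_integral hZ hZA hr hE hrx hC hK hv hvsum]
    with ω hmean hnoise
  have hbias : Tendsto (cesaroMean fun i =>
      ∫ u, scaledKernel K (v (i + 1)) x u ∂(R (Z i ω)) - r (Z i ω) x) atTop (𝓝 0) := by
    refine Tendsto.cesaro (Metric.tendsto_nhds.2 fun ε hε => ?_)
    have hunif := Metric.tendstoUniformlyOn_iff.1
      (tendstoUniformlyOn_integral_scaledKernel hr hE hrx hK) ε hε
    filter_upwards [((tendsto_add_atTop_iff_nat 1).2 hv).eventually hunif] with i hi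
    rw [dist_zero_right, ← dist_eq_norm, dist_comm]
    exact hi _ (hZA i ω)
  refine tendsto_inv_mul_sum_range_succ ?_
  simpa only [← cesaroMean_add, sub_add_sub_cancel, sub_add_cancel, add_zero, zero_add]
    using (hnoise.add hbias).add hmean

end RecursiveDensityEstimator

theorem stmt2
    {d : ℕ} (hd : 1 ≤ d)
    {Ω : Type*} [MeasurableSpace Ω] (P : Measure Ω) [IsProbabilityMeasure P]
    (E : Set (EuclideanSpace ℝ (Fin d))) (hEopen : IsOpen E) (hEne : E.Nonempty)
    (Zm : ℕ → Ω → (EuclideanSpace ℝ (Fin d))) (hZmmeas : ∀ n, Measurable (Zm n))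
    (hZmmem : ∀ n, 1 ≤ n → ∀ ω, Zm n ω ∈ closure E)
    (R : (EuclideanSpace ℝ (Fin d)) → Measure (EuclideanSpace ℝ (Fin d))) (hRprob : ∀ ξ, IsProbabilityMeasure (R ξ))
    (hRkermeas : ∀ B : Set (EuclideanSpace ℝ (Fin d)), MeasurableSet B → Measurable fun ξ => R ξ B)
    (hMarkov : ∀ n, 1 ≤ n → ∀ g : (EuclideanSpace ℝ (Fin d)) → ℝ, Measurable g → (∃ C, ∀ u, |g u| ≤ C) →
      P[fun ω => g (Zm (n+1) ω)|⨆ i : Fin n, MeasurableSpace.comap (Zm (i.1+1)) inferInstance]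
        =ᵐ[P] fun ω => ∫ u, g u ∂(R (Zm n ω)))
    (μ : Measure (EuclideanSpace ℝ (Fin d))) (hμprob : IsProbabilityMeasure μ)
    (ε : ℝ) (hε : 0 < ε) (k : ℕ) (hk : 1 ≤ k)
    (hDoeblin : ∀ ξ ∈ closure E, ∀ B : Set (EuclideanSpace ℝ (Fin d)), MeasurableSet B →
      ENNReal.ofReal ε * μ B ≤ iterK R k ξ B)
    (π : Measure (EuclideanSpace ℝ (Fin d))) (hπprob : IsProbabilityMeasure π)
    (hπinv : ∀ B : Set (EuclideanSpace ℝ (Fin d)), MeasurableSet B → π B = ∫⁻ ξ, R ξ B ∂π)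
    (κ ρ : ℝ) (hκ : 0 < κ) (hρ : 1 < ρ)
    (hTV : ∀ n : ℕ, 1 ≤ n → ∀ ξ ∈ closure E, ∀ B : Set (EuclideanSpace ℝ (Fin d)), MeasurableSet B →
      |(iterK R n ξ B).toReal - (π B).toReal| ≤ κ * ρ ^ (-(n:ℝ)))
    (r : (EuclideanSpace ℝ (Fin d)) → (EuclideanSpace ℝ (Fin d)) → ℝ) (hrmeas : Measurable (Function.uncurry r)) (hrnonneg : ∀ a b, 0 ≤ r a b)
    (Cr : ℝ) (hrbdd : ∀ a b, r a b ≤ Cr)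
    (rLip : ℝ) (hrLip : ∀ a : (EuclideanSpace ℝ (Fin d)), ∀ b ∈ E, ∀ b' ∈ E, |r a b' - r a b| ≤ rLip * dist b' b)
    (hRdens : ∀ ξ ∈ closure E, ∀ B : Set (EuclideanSpace ℝ (Fin d)), B ⊆ E → MeasurableSet B →
      R ξ B = ∫⁻ z in B, ENNReal.ofReal (r ξ z) ∂volume)
    (p : (EuclideanSpace ℝ (Fin d)) → ℝ) (hp : ∀ z ∈ E, p z = ∫ u, r u z ∂π)
    (K : (EuclideanSpace ℝ (Fin d)) → ℝ) (hKmeas : Measurable K) (hKnonneg : ∀ z, 0 ≤ K z)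
    (CK : ℝ) (hKbdd : ∀ z, K z ≤ CK) (hKint : ∫ z, K z ∂volume = 1)
    (δ : ℝ) (hδ : 0 < δ) (hKsupp : Function.support K ⊆ Metric.ball 0 δ)
    (v1 Alpha : ℝ) (hv1 : 0 < v1) (hAlpha : 0 < Alpha)
    (v : ℕ → ℝ) (hv : ∀ j : ℕ, v j = v1 * (j:ℝ) ^ (-Alpha))
    (x : (EuclideanSpace ℝ (Fin d))) (hx : x ∈ E)
    (hxdist : v1 * δ < Metric.infDist x (frontier E))
    (hαd : Alpha * d < 1) :
    ∀ᵐ ω ∂P, Tendsto (fun n : ℕ => (n:ℝ)⁻¹ * ∑ j ∈ Finset.Icc 1 (n+1), ((v j) ^ d)⁻¹ * K ((v j)⁻¹ • (Zm j ω - x))) atTop (nhds (p x)) := by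
  let Q : Kernel (EuclideanSpace ℝ (Fin d)) (EuclideanSpace ℝ (Fin d)) :=
    ⟨R, Measure.measurable_of_measurable_coe R hRkermeas⟩
  have : IsMarkovKernel Q := ⟨hRprob⟩
  obtain ⟨F, hZ⟩ : ∃ F, IsMarkovChain Q F (fun n => Zm (n + 1)) P :=
    exists_isMarkovChain_of_condExp_iSup_fin (fun n => hZmmeas (n + 1))
      fun n => hMarkov (n + 1) (Nat.le_add_left 1 n)
  have hErg : UniformlyErgodicOn Q π (closure E) := uniformlyErgodicOn_of_geometric_rate hρ
    fun n hn ξ hξ B hB => iterK_eq_pow Q n ξ ▸ hTV n hn ξ hξ B hB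
  have hLip : EquicontinuousAt (fun ξ : closure E => r ξ) x :=
    equicontinuousAt_of_dist_le_mul (hEopen.mem_nhds hx) fun ξ y hy => hrLip ξ y hy x hx
  have hKernel : IsSmoothingKernel K δ volume :=
    ⟨hKmeas, ⟨CK, fun z => (abs_of_nonneg (hKnonneg z)).trans_le (hKbdd z)⟩, hKsupp, hKint⟩
  rw [hp x hx]
  simpa only [sum_Icc_one_eq_sum_range, hv, scaledKernel, finrank_euclideanSpace_fin] using
    stmt2_general hZ (fun n => hZmmem (n + 1) (Nat.le_add_left 1 n)) hErg
      ⟨hrmeas, hrnonneg, hRdens⟩ (hEopen.mem_nhds hx) hLip (fun ξ => hrbdd ξ x) hKernel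
      (tendsto_mul_succ_rpow_neg hv1 hAlpha)
      (summable_inv_mul_succ_rpow_neg_pow_div_sq v1 (by rwa [finrank_euclideanSpace_fin]))
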